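/- Let H be a complex Banach space, U ⊆ ℂ an open connected set, and B : U → L(H,H) a holomorphic operator-valued function such that B(z) is a compact operator for every z ∈ U. Define T(z) = I − B(z). If there exists z₀ ∈ U such that T(z₀) is boundedly invertible (i.e., the resolvent set of T is nonempty), then the spectrum σ(T) = {z ∈ U : T(z) is not boundedly invertible} has no accumulation point in U, and every z ∈ σ(T) is an eigenvalue, i.e., there exists u ∈ H, u ≠ 0, with B(z)u = u. -/

import Mathlib

/-!
Near a point `z`, the Fredholm alternative provides a finite-rank operator `K` such that
`T z + K` is invertible, hence `T w + K` is invertible with analytic inverse for `w` near `z`.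
Factoring `T w = (T w + K) (1 - (T w + K)⁻¹ K)` and exchanging the two factors of `(T w + K)⁻¹ K`,
invertibility of `T w` becomes that of an analytic family of operators on the finite-dimensional
range of `K`, that is, the nonvanishing of its determinant. So near `z` either no `T w` is
invertible, or all are except possibly `T z`. Both alternatives are open conditions on `z`, and
connectedness propagates the second one from the point `z₀`.
-/

open Filter Topology Function

section LinearAlgebra

universe v w

theorem exists_linearMap_injective_or_surjective (𝕜 : Type*) (V : Type v) (W : Type w)
    [DivisionRing 𝕜] [AddCommGroup V] [Module 𝕜 V] [AddCommGroup W] [Module 𝕜 W] :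
    ∃ f : V →ₗ[𝕜] W, Injective f ∨ Surjective f := by
  rcases le_total (Cardinal.lift.{w} (Module.rank 𝕜 V))
      (Cardinal.lift.{v} (Module.rank 𝕜 W)) with hVW | hWV
  · obtain ⟨f, hf⟩ := lift_rank_le_iff_exists_linearMap.1 hVW
    exact ⟨f, .inl hf⟩
  · obtain ⟨g, hg⟩ := lift_rank_le_iff_exists_linearMap.1 hWV
    obtain ⟨f, hfg⟩ := g.exists_leftInverse_of_injective (LinearMap.ker_eq_bot.2 hg)
    exact ⟨f, .inr fun w ↦ ⟨g w, LinearMap.congr_fun hfg w⟩⟩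

variable {R E F : Type*} [Ring R] [AddCommGroup E] [Module R E] [AddCommGroup F] [Module R F]
  {T : E →ₗ[R] F} {P : E →ₗ[R] T.ker} {Q : Submodule R F} {f : T.ker →ₗ[R] Q}

theorem injective_add_comp_ker_projection (hP : ∀ x : T.ker, P x = x)
    (hQ : Disjoint T.range Q) (hf : Injective f) :
    Injective (T + Q.subtype ∘ₗ f ∘ₗ P) := by
  rw [injective_iff_map_eq_zero]
  intro x hx
  have hsum : T x + f (P x) = 0 := hx
  have hTx : T x = 0 :=
    Submodule.disjoint_def.1 hQ _ ⟨x, rfl⟩ (eq_neg_of_add_eq_zero_left hsum ▸ neg_mem (f (P x)).2)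
  have hfPx : f (P x) = 0 := by simpa [hTx] using hsum
  have hPx : P x = 0 := (map_eq_zero_iff f hf).1 hfPx
  exact congrArg Subtype.val ((hP ⟨x, hTx⟩).symm.trans hPx)

theorem surjective_add_comp_ker_projection (hP : ∀ x : T.ker, P x = x)
    (hQ : Codisjoint T.range Q) (hf : Surjective f) :
    Surjective (T + Q.subtype ∘ₗ f ∘ₗ P) := by
  intro y
  obtain ⟨_, ⟨x, rfl⟩, q, hq, rfl⟩ := Submodule.mem_sup.1 (hQ.eq_top ▸ Submodule.mem_top (x := y))
  obtain ⟨k, hk⟩ := hf ⟨q, hq⟩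
  have hT (n : T.ker) : T n = 0 := n.2
  exact ⟨x - P x + k, by simp [hT, hP, hk]⟩

end LinearAlgebra

section ContinuousLinearMap

variable {R E F : Type*} [Ring R]
  [AddCommGroup E] [Module R E] [TopologicalSpace E] [IsTopologicalAddGroup E]
  [AddCommGroup F] [Module R F] [TopologicalSpace F] [IsTopologicalAddGroup F]

theorem isUnit_one_sub_comp_of_isUnit_one_sub_comp {f : E →L[R] F} {g : F →L[R] E}
    (h : IsUnit (1 - g ∘L f)) : IsUnit (1 - f ∘L g) := by
  obtain ⟨S, hleft, hright⟩ := isUnit_iff_exists.1 h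
  refine isUnit_iff_exists.2 ⟨1 + f ∘L S ∘L g, ?_, ?_⟩
  · ext y
    have hSg : S (g y) - g (f (S (g y))) = g y := congr($hleft (g y))
    have hfSg := congrArg f hSg
    simp only [map_sub] at hfSg
    simp [← hfSg]
  · ext y
    have hSg : S (g (y - f (g y))) = g y := by simpa using congr($hright (g y))
    change y - f (g y) + f (S (g (y - f (g y)))) = y
    rw [hSg, sub_add_cancel]

theorem isUnit_one_sub_comp_comm (f : E →L[R] F) (g : F →L[R] E) :
    IsUnit (1 - g ∘L f) ↔ IsUnit (1 - f ∘L g) :=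
  ⟨isUnit_one_sub_comp_of_isUnit_one_sub_comp, isUnit_one_sub_comp_of_isUnit_one_sub_comp⟩

/-- The operator `1 - K (T + K)⁻¹` on the range of `K`, which carries the invertibility of `T` when
`T + K` is invertible. The inverse is `Ring.inverse`, which is `0` when `T + K` is not a unit. -/
noncomputable def rangeReduction (T K : E →L[R] E) : K.range →L[R] K.range :=
  1 - K.rangeRestrict ∘L Ring.inverse (T + K) ∘L K.range.subtypeL

theorem isUnit_iff_isUnit_rangeReduction {T K : E →L[R] E} (h : IsUnit (T + K)) :
    IsUnit T ↔ IsUnit (rangeReduction T K) := by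
  have hfactor : T = (T + K) * (1 - (Ring.inverse (T + K) ∘L K.range.subtypeL) ∘L
      K.rangeRestrict) := by
    have hK : (Ring.inverse (T + K) ∘L K.range.subtypeL) ∘L K.rangeRestrict =
        Ring.inverse (T + K) * K := rfl
    rw [hK, mul_sub, mul_one, Ring.mul_inverse_cancel_left _ _ h, add_sub_cancel_right]
  calc IsUnit T
    _ ↔ IsUnit (1 - (Ring.inverse (T + K) ∘L K.range.subtypeL) ∘L K.rangeRestrict) := by
      have hmul := Units.isUnit_units_mul h.unit
        (1 - (Ring.inverse (T + K) ∘L K.range.subtypeL) ∘L K.rangeRestrict)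
      rwa [h.unit_spec, ← hfactor] at hmul
    _ ↔ IsUnit (rangeReduction T K) := isUnit_one_sub_comp_comm _ _

end ContinuousLinearMap

section Analytic

variable {𝕜 D : Type*} [NontriviallyNormedField 𝕜] [NormedAddCommGroup D] [NormedSpace 𝕜 D] {z : D}

theorem analyticAt_matrix_det {n A : Type*} [Fintype n] [DecidableEq n] [NormedCommRing A]
    [NormedAlgebra 𝕜 A] {M : D → Matrix n n A} (hM : ∀ i j, AnalyticAt 𝕜 (fun w ↦ M w i j) z) :
    AnalyticAt 𝕜 (fun w ↦ (M w).det) z := by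
  simp only [Matrix.det_apply, Units.smul_def, zsmul_eq_mul]
  exact Finset.analyticAt_fun_sum _ fun σ _ ↦
    analyticAt_const.mul (Finset.analyticAt_fun_prod _ fun i _ ↦ hM _ _)

theorem analyticAt_det [CompleteSpace 𝕜] {N : Type*} [NormedAddCommGroup N] [NormedSpace 𝕜 N]
    [FiniteDimensional 𝕜 N] {M : D → N →L[𝕜] N} (hM : AnalyticAt 𝕜 M z) :
    AnalyticAt 𝕜 (fun w ↦ (M w).det) z := by
  let b := Module.finBasis 𝕜 N
  have hentry (i j) : AnalyticAt 𝕜 (fun w ↦ LinearMap.toMatrix b b (M w) i j) z := by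
    simp only [LinearMap.toMatrix_apply]
    exact (((b.coord i).toContinuousLinearMap ∘L
      ContinuousLinearMap.apply 𝕜 N (b j)).analyticAt _).fun_comp hM
  simpa only [ContinuousLinearMap.det, LinearMap.det_toMatrix] using analyticAt_matrix_det hentry

theorem analyticAt_rangeReduction {E : Type*} [NormedAddCommGroup E] [NormedSpace 𝕜 E]
    [CompleteSpace E] {T : D → E →L[𝕜] E} {K : E →L[𝕜] E} (hT : AnalyticAt 𝕜 T z)
    (hK : IsUnit (T z + K)) : AnalyticAt 𝕜 (fun w ↦ rangeReduction (T w) K) z := by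
  have hinverse : AnalyticAt 𝕜 Ring.inverse (T z + K) :=
    hK.unit_spec ▸ analyticAt_inverse (𝕜 := 𝕜) hK.unit
  have hinverse_add : AnalyticAt 𝕜 (fun w ↦ Ring.inverse (T w + K)) z :=
    hinverse.fun_comp (f := fun w ↦ T w + K) (hT.add analyticAt_const)
  exact analyticAt_const.sub (((ContinuousLinearMap.compL 𝕜 _ _ _ K.rangeRestrict ∘L
    (ContinuousLinearMap.compL 𝕜 _ _ _).flip K.range.subtypeL).analyticAt _).fun_comp hinverse_add)

end Analytic

section Dichotomy

variable {𝕜 E : Type*} [NontriviallyNormedField 𝕜] [NormedAddCommGroup E] [NormedSpace 𝕜 E] {z : 𝕜}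

theorem isUnit_iff_det_ne_zero [CompleteSpace 𝕜] [FiniteDimensional 𝕜 E] (f : E →L[𝕜] E) :
    IsUnit f ↔ f.det ≠ 0 := by
  have := FiniteDimensional.complete 𝕜 E
  rw [ContinuousLinearMap.isUnit_iff_isUnit_toLinearMap, LinearMap.isUnit_iff_isUnit_det,
    isUnit_iff_ne_zero]

theorem eventually_not_isUnit_or_eventually_isUnit [CompleteSpace 𝕜] [FiniteDimensional 𝕜 E]
    {M : 𝕜 → E →L[𝕜] E} (hM : AnalyticAt 𝕜 M z) :
    (∀ᶠ w in 𝓝 z, ¬ IsUnit (M w)) ∨ ∀ᶠ w in 𝓝[≠] z, IsUnit (M w) := by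
  simpa only [isUnit_iff_det_ne_zero, not_not] using
    (analyticAt_det hM).eventually_eq_zero_or_eventually_ne_zero

theorem eventually_not_isUnit_or_eventually_isUnit_of_isUnit_add [CompleteSpace 𝕜]
    [CompleteSpace E] {T : 𝕜 → E →L[𝕜] E} {K : E →L[𝕜] E} [FiniteDimensional 𝕜 K.range]
    (hT : AnalyticAt 𝕜 T z) (hK : IsUnit (T z + K)) :
    (∀ᶠ w in 𝓝 z, ¬ IsUnit (T w)) ∨ ∀ᶠ w in 𝓝[≠] z, IsUnit (T w) := by
  have hadd : ∀ᶠ w in 𝓝 z, IsUnit (T w + K) :=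
    (hT.continuousAt.add continuousAt_const).eventually (Units.isOpen.mem_nhds hK)
  have hiff : ∀ᶠ w in 𝓝 z, (IsUnit (T w) ↔ IsUnit (rangeReduction (T w) K)) :=
    hadd.mono fun _ ↦ isUnit_iff_isUnit_rangeReduction
  refine (eventually_not_isUnit_or_eventually_isUnit (analyticAt_rangeReduction hT hK)).imp
    (fun hnot ↦ ?_) fun hunit ↦ ?_
  · filter_upwards [hnot, hiff] with w hw hTw using hTw.not.2 hw
  · filter_upwards [hunit, hiff.filter_mono nhdsWithin_le_nhds] with w hw hTw using hTw.2 hw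

end Dichotomy

section Fredholm

variable {𝕜 E : Type*} [NontriviallyNormedField 𝕜] [NormedAddCommGroup E] [NormedSpace 𝕜 E]
  {C : E →L[𝕜] E}

theorem exists_ne_zero_apply_eq_self_of_not_isUnit_one_sub [CompleteSpace E]
    (hC : IsCompactOperator C) (h : ¬ IsUnit (1 - C)) : ∃ u, u ≠ 0 ∧ C u = u := by
  have hres : (1 : 𝕜) ∉ resolventSet 𝕜 C := by simpa [spectrum.mem_resolventSet_iff] using h
  obtain ⟨u, hu⟩ := ((hC.hasEigenvalue_or_mem_resolventSet one_ne_zero).resolve_right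
    hres).exists_hasEigenvector
  exact ⟨u, hu.2, by simpa using hu.apply_eq_smul⟩

theorem isUnit_one_sub_of_injective [CompleteSpace E] (hC : IsCompactOperator C)
    (h : Injective ⇑(1 - C)) : IsUnit (1 - C) := by
  by_contra hnot
  obtain ⟨u, hu, hCu⟩ := exists_ne_zero_apply_eq_self_of_not_isUnit_one_sub hC hnot
  exact hu (h (by simp [hCu]))

theorem finiteDimensional_ker_one_sub [CompleteSpace 𝕜] (hC : IsCompactOperator C) :
    FiniteDimensional 𝕜 (1 - C).ker := by
  have hfix (v : (1 - C).ker) : C v = v := (sub_eq_zero.1 v.2).symm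
  have hmem (v : (1 - C).ker) : (C ∘ (1 - C).ker.subtypeL) v ∈ (1 - C).ker := by
    simpa only [comp_apply, Submodule.subtypeL_apply, hfix] using v.2
  have hid : Set.codRestrict (C ∘ (1 - C).ker.subtypeL) (1 - C).ker hmem = id :=
    funext fun v ↦ Subtype.ext (hfix v)
  exact .of_isCompactOperator_id
    (hid ▸ (hC.comp_clm (1 - C).ker.subtypeL).codRestrict hmem (1 - C).isClosed_ker)

theorem exists_comp_eq_one_of_surjective [CompleteSpace E] {F : Type*} [NormedAddCommGroup F]
    [NormedSpace 𝕜 F] [CompleteSpace F] {T : E →L[𝕜] F} (hT : Surjective T)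
    (hker : T.ker.ClosedComplemented) : ∃ S : F →L[𝕜] E, T ∘L S = 1 := by
  obtain ⟨P, hP⟩ := hker
  let e := T.equivProdOfSurjectiveOfIsCompl P (LinearMap.range_eq_top.2 hT)
    (LinearMap.range_eq_top.2 fun x ↦ ⟨x, hP x⟩) (LinearMap.isCompl_of_proj hP)
  refine ⟨e.symm ∘L .inl 𝕜 F T.ker, ?_⟩
  ext y
  exact congrArg Prod.fst (e.apply_symm_apply (y, 0))

end Fredholm

section RCLike

variable {𝕜 E : Type*} [RCLike 𝕜] [NormedAddCommGroup E] [NormedSpace 𝕜 E] [CompleteSpace E]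
  {C : E →L[𝕜] E}

theorem isUnit_one_sub_of_surjective (hC : IsCompactOperator C) (h : Surjective ⇑(1 - C)) :
    IsUnit (1 - C) := by
  have := finiteDimensional_ker_one_sub hC
  obtain ⟨S, hS⟩ := exists_comp_eq_one_of_surjective h (.of_finiteDimensional (𝕜 := 𝕜) _)
  have hmul : (1 - C) * S = 1 := hS
  -- A right inverse of `1 - C` is again a compact perturbation of the identity.
  have hSC : S = 1 - -(C * S) := by rw [← hmul]; noncomm_ring
  have hSinj : Injective S := LeftInverse.injective (g := ⇑(1 - C)) fun y ↦ congr($hmul y)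
  have hSunit : IsUnit S := by
    rw [hSC] at hSinj ⊢
    exact isUnit_one_sub_of_injective (hC.comp_clm S).neg hSinj
  rw [← Units.isUnit_mul_units _ hSunit.unit, hSunit.unit_spec, hmul]
  exact isUnit_one

theorem exists_finiteDimensional_range_isUnit_one_sub_add (hC : IsCompactOperator C) :
    ∃ K : E →L[𝕜] E, FiniteDimensional 𝕜 K.range ∧ IsUnit (1 - C + K) := by
  have := finiteDimensional_ker_one_sub hC
  have : LocallyCompactSpace (1 - C).ker := .of_finiteDimensional_of_complete 𝕜 _
  obtain ⟨P, hP⟩ := Submodule.ClosedComplemented.of_finiteDimensional (𝕜 := 𝕜) (1 - C).ker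
  obtain ⟨Q, hQ⟩ := (1 - C).range.exists_isCompl
  obtain ⟨f, hf⟩ := exists_linearMap_injective_or_surjective 𝕜 (1 - C).ker Q
  let F : (1 - C).ker →L[𝕜] E := (Q.subtype ∘ₗ f).toContinuousLinearMap
  have hcompact : IsCompactOperator (C - F ∘L P) :=
    hC.sub ((isCompactOperator_of_locallyCompactSpace_rng F).comp_clm P)
  refine ⟨F ∘L P, ?_, ?_⟩
  · exact Submodule.finiteDimensional_of_le (LinearMap.range_comp_le_range P.toLinearMap
      F.toLinearMap)
  · have hsub : 1 - C + F ∘L P = 1 - (C - F ∘L P) := sub_add _ _ _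
    rw [hsub]
    rcases hf with hinj | hsurj
    · refine isUnit_one_sub_of_injective hcompact ?_
      rw [← hsub]
      exact injective_add_comp_ker_projection (P := P.toLinearMap) hP hQ.disjoint hinj
    · refine isUnit_one_sub_of_surjective hcompact ?_
      rw [← hsub]
      exact surjective_add_comp_ker_projection (P := P.toLinearMap) hP hQ.codisjoint hsurj

end RCLike

theorem eventually_nhdsNE_of_isPreconnected {X : Type*} [TopologicalSpace X] [T1Space X]
    [∀ x : X, (𝓝[≠] x).NeBot] {U : Set X} (hU : IsPreconnected U) {p : X → Prop}
    (hp : ∀ x ∈ U, (∀ᶠ y in 𝓝 x, ¬ p y) ∨ ∀ᶠ y in 𝓝[≠] x, p y) (hex : ∃ x ∈ U, p x) :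
    ∀ x ∈ U, ∀ᶠ y in 𝓝[≠] x, p y := by
  obtain ⟨x₀, hx₀, hpx₀⟩ := hex
  have hdisj : Disjoint {x | ∀ᶠ y in 𝓝[≠] x, p y} {x | ∀ᶠ y in 𝓝 x, ¬ p y} := by
    rw [Set.disjoint_left]
    intro x (hpx : ∀ᶠ y in 𝓝[≠] x, p y) (hnpx : ∀ᶠ y in 𝓝 x, ¬ p y)
    obtain ⟨y, hpy, hnpy⟩ := (hpx.and (hnpx.filter_mono nhdsWithin_le_nhds)).exists
    exact hnpy hpy
  exact hU.subset_left_of_subset_union isOpen_setOfPred_eventually_nhdsWithin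
    isOpen_setOfPred_eventually_nhds hdisj (fun x hx ↦ (hp x hx).symm)
    ⟨x₀, hx₀, (hp x₀ hx₀).resolve_left fun hnot ↦ hnot.self_of_nhds hpx₀⟩

theorem stmt0_general {𝕜 H : Type*} [RCLike 𝕜] [NormedAddCommGroup H] [NormedSpace 𝕜 H]
    [CompleteSpace H] {U : Set 𝕜} (hU : IsPreconnected U) {B : 𝕜 → H →L[𝕜] H}
    (hB : AnalyticOnNhd 𝕜 B U) (hcpt : ∀ z ∈ U, IsCompactOperator (B z))
    (hres : ∃ z₀ ∈ U, IsUnit (1 - B z₀)) :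
    (∀ z ∈ U, ¬ AccPt z (𝓟 {w | w ∈ U ∧ ¬ IsUnit (1 - B w)})) ∧
      ∀ z ∈ U, ¬ IsUnit (1 - B z) → ∃ u : H, u ≠ 0 ∧ B z u = u := by
  refine ⟨?_, fun z hz ↦ exists_ne_zero_apply_eq_self_of_not_isUnit_one_sub (hcpt z hz)⟩
  have hlocal : ∀ z ∈ U, (∀ᶠ w in 𝓝 z, ¬ IsUnit (1 - B w)) ∨
      ∀ᶠ w in 𝓝[≠] z, IsUnit (1 - B w) := by
    intro z hz
    obtain ⟨K, _, hK⟩ := exists_finiteDimensional_range_isUnit_one_sub_add (hcpt z hz)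
    exact eventually_not_isUnit_or_eventually_isUnit_of_isUnit_add
      (analyticAt_const.sub (hB z hz)) hK
  intro z hz
  rw [accPt_iff_frequently_nhdsNE, not_frequently]
  filter_upwards [eventually_nhdsNE_of_isPreconnected hU hlocal hres z hz] with w hw h
  exact h.2 hw

/-- Spectrum of a holomorphic compact-operator family `T(z) = I - B(z)` with nonempty
resolvent set: the spectrum has no accumulation point in `U` and each spectral point
is an eigenvalue. -/
theorem stmt0 {H : Type*} [NormedAddCommGroup H] [NormedSpace ℂ H] [CompleteSpace H]
    (U : Set ℂ) (hUopen : IsOpen U) (hUconn : IsConnected U)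
    (B : ℂ → H →L[ℂ] H) (hB : DifferentiableOn ℂ B U)
    (hcpt : ∀ z ∈ U, IsCompactOperator (B z))
    (hres : ∃ z₀ ∈ U, IsUnit ((1 : H →L[ℂ] H) - B z₀)) :
    (∀ z ∈ U, ¬ AccPt z (Filter.principal {w | w ∈ U ∧ ¬ IsUnit ((1 : H →L[ℂ] H) - B w)})) ∧
    (∀ z ∈ U, ¬ IsUnit ((1 : H →L[ℂ] H) - B z) → ∃ u : H, u ≠ 0 ∧ B z u = u) :=
  stmt0_general hUconn.isPreconnected (hB.analyticOnNhd hUopen) hcpt hres
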